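/- Let d ≥ 2 and T ≥ 1. Let σ₁, …, σ_T be i.i.d. uniformly random transpositions in S_d and ξ₁, …, ξ_T i.i.d. Bernoulli(1/2) independent of everything, and for fixed σ = (σ₁,…,σ_T) let μ_σ be the law (over the ξ_i) of P_σ = σ₁^{ξ₁} ⋯ σ_T^{ξ_T}. For each irreducible complex representation ρ of S_d, let d_ρ be its dimension and r_ρ = χ_ρ/d_ρ, where χ_ρ is the character of ρ evaluated at any transposition. Then E_σ[ TV(μ_σ, Unif_{S_d}) ] ≤ ( Σ_ρ d_ρ² ((1 + r_ρ)/2)^T )^{1/2}, where the sum runs over a complete set of pairwise non-isomorphic nontrivial irreducible complex representations of S_d, TV(μ,ν) = Σ_x |μ(x) − ν(x)|, and Unif_{S_d} is the uniform distribution on S_d. -/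

import Mathlib

noncomputable section

open scoped Classical

namespace KacJL

/-- The product `σ₁^{ξ₁} ⋯ σ_T^{ξ_T}`. -/
def permProd {d T : ℕ} (σ : Fin T → Equiv.Perm (Fin d)) (ξ : Fin T → Bool) :
    Equiv.Perm (Fin d) :=
  (List.ofFn fun t => if ξ t then σ t else 1).prod

/-- For a fixed sequence `σ` of permutations, the probability that
`σ₁^{ξ₁} ⋯ σ_T^{ξ_T} = τ` over i.i.d. Bernoulli(1/2) exponents `ξ`. -/
def permProdPMF {d T : ℕ} (σ : Fin T → Equiv.Perm (Fin d)) (τ : Equiv.Perm (Fin d)) : ℝ :=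
  ((Finset.univ.filter fun ξ : Fin T → Bool => permProd σ ξ = τ).card : ℝ) / 2 ^ T

/-- The total variation distance (in the normalization `TV(μ,ν) = ∑ x |μ(x) - ν(x)|`)
between the law of `σ₁^{ξ₁} ⋯ σ_T^{ξ_T}` and the uniform distribution on `S_d`. -/
def tvToUniform {d T : ℕ} (σ : Fin T → Equiv.Perm (Fin d)) : ℝ :=
  ∑ τ : Equiv.Perm (Fin d), |permProdPMF σ τ - ((d.factorial : ℝ))⁻¹|

/-- The expectation over i.i.d. uniformly random transpositions `σ₁, …, σ_T` of the total
variation distance `TV(μ_σ, Unif_{S_d})`. -/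
def avgTV (d T : ℕ) : ℝ :=
  (∑ σ : Fin T → {τ : Equiv.Perm (Fin d) // τ.IsSwap},
      tvToUniform fun t => (σ t : Equiv.Perm (Fin d))) /
    (Fintype.card {τ : Equiv.Perm (Fin d) // τ.IsSwap}) ^ T

theorem trace_pi_scalar {n : ℕ} (W : Fin n → Type) [∀ j, AddCommGroup (W j)]
    [∀ j, Module ℂ (W j)] [∀ j, FiniteDimensional ℂ (W j)] (c : Fin n → ℂ)
    (f : (∀ j, W j) →ₗ[ℂ] (∀ j, W j)) (hf : ∀ x j, f x j = c j • x j) :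
    LinearMap.trace ℂ _ f = ∑ j, c j * Module.finrank ℂ (W j) := by
  rw [LinearMap.trace_eq_matrix_trace ℂ (Pi.basis fun j => Module.finBasis ℂ (W j))]
  rw [Matrix.trace, Fintype.sum_sigma]
  refine Finset.sum_congr rfl fun j _ => ?_
  have : ∀ k : Fin (Module.finrank ℂ (W j)),
      (LinearMap.toMatrix (Pi.basis fun j => Module.finBasis ℂ (W j))
        (Pi.basis fun j => Module.finBasis ℂ (W j)) f).diag ⟨j, k⟩ = c j := by
    intro k
    simp [Matrix.diag, LinearMap.toMatrix_apply, hf, Pi.basis_apply]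
  rw [Finset.sum_congr rfl fun k _ => this k]
  simp [mul_comm]

theorem trace_regular {G : Type} [Group G] [Fintype G] (a : MonoidAlgebra ℂ G) :
    LinearMap.trace ℂ _ (Algebra.lmul ℂ (MonoidAlgebra ℂ G) a) =
      Fintype.card G * a.coeff 1 := by
  rw [LinearMap.trace_eq_matrix_trace ℂ (MonoidAlgebra.basis G ℂ)]
  rw [Matrix.trace]
  have : ∀ g : G, (LinearMap.toMatrix (MonoidAlgebra.basis G ℂ)
        (MonoidAlgebra.basis G ℂ) (Algebra.lmul ℂ (MonoidAlgebra ℂ G) a)).diag g = a.coeff 1 := by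
    intro g
    simp [Matrix.diag, LinearMap.toMatrix_apply, MonoidAlgebra.basis]
  rw [Finset.sum_congr rfl fun k _ => this k]
  simp

theorem mult_le {G : Type} [Group G] [Fintype G] {n : ℕ}
    (W : Fin n → Submodule (MonoidAlgebra ℂ G) (MonoidAlgebra ℂ G))
    (e : MonoidAlgebra ℂ G ≃ₗ[MonoidAlgebra ℂ G] (∀ j, W j))
    (hW : ∀ j, Nontrivial (W j))
    (M : Type) [AddCommGroup M] [Module ℂ M] [FiniteDimensional ℂ M]
    (ψ : G → (M →ₗ[ℂ] M)) (J : Finset (Fin n))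
    (h : ∀ j ∈ J, ∃ φ : W j ≃ₗ[ℂ] M, ∀ (g : G) (x : W j),
      φ (MonoidAlgebra.single g (1 : ℂ) • x) = ψ g (φ x)) :
    J.card ≤ Module.finrank ℂ M := by
  have h' : ∀ j : J, ∃ φ : W j ≃ₗ[ℂ] M, ∀ (g : G) (x : W j),
      φ (MonoidAlgebra.single g (1 : ℂ) • x) = ψ g (φ x) := fun j => h j j.2
  choose φ hφ using h'
  have hli : LinearIndependent ℂ (fun j : J => φ j (e 1 j)) := by
    rw [Fintype.linearIndependent_iff]
    intro c hc k
    let F : MonoidAlgebra ℂ G →ₗ[ℂ] M := ∑ j : J, c j •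
      ((φ j).toLinearMap ∘ₗ LinearMap.proj (R := ℂ) (φ := fun j => W j) (j : Fin n) ∘ₗ
        (e.restrictScalars ℂ).toLinearMap)
    have hF : ∀ a, F a = ∑ j : J, c j • φ j (e a j) := by
      intro a; simp [F]
    have hF0 : F = 0 := by
      refine (MonoidAlgebra.basis G ℂ).ext fun g => ?_
      have hg : e (MonoidAlgebra.single g 1) = MonoidAlgebra.single g (1 : ℂ) • e 1 := by
        rw [← map_smul]; simp
      have : F (MonoidAlgebra.single g 1) = 0 := by
        rw [hF, hg]
        simp only [Pi.smul_apply, hφ]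
        rw [← map_zero (ψ g), ← hc, map_sum]
        simp
      simpa [MonoidAlgebra.basis] using this
    obtain ⟨x, hx⟩ := exists_ne (0 : W k)
    have h1 := hF (e.symm (Pi.single (k : Fin n) x))
    rw [hF0, Finset.sum_eq_single k] at h1
    · simp only [LinearMap.zero_apply, LinearEquiv.apply_symm_apply, Pi.single_eq_same] at h1
      rcases smul_eq_zero.1 h1.symm with h1 | h1
      · exact h1
      · exact absurd ((φ k).map_eq_zero_iff.1 h1) hx
    · intro j _ hj
      have : (j : Fin n) ≠ k := fun h => hj (Subtype.ext h)
      simp [this]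
    · simp
  simpa using hli.fintype_card_le_finrank

theorem schur_scalar {G : Type} [Group G] (V : Type) [AddCommGroup V] [Module ℂ V]
    [FiniteDimensional ℂ V] [Nontrivial V] (ρ : G →* (V →ₗ[ℂ] V))
    (hirred : ∀ W : Submodule ℂ V, (∀ g : G, ∀ v ∈ W, ρ g v ∈ W) → W = ⊥ ∨ W = ⊤)
    (f : V →ₗ[ℂ] V) (hf : ∀ g v, f (ρ g v) = ρ g (f v)) :
    ∀ v, f v = (LinearMap.trace ℂ V f / Module.finrank ℂ V) • v := by
  obtain ⟨c, hc⟩ := Module.End.exists_eigenvalue (K := ℂ) f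
  have key : ∀ v, f v = c • v := by
    have := hirred (Module.End.eigenspace f c) (by
      intro g v hv
      rw [Module.End.mem_eigenspace_iff] at hv ⊢
      rw [hf, hv, map_smul])
    rcases this with h | h
    · exact absurd h hc
    · intro v
      rw [← Module.End.mem_eigenspace_iff, h]; trivial
  have hfe : f = c • LinearMap.id := by ext v; simp [key]
  have hd : (Module.finrank ℂ V : ℂ) ≠ 0 := by
    exact_mod_cast Module.finrank_pos.ne'
  have : LinearMap.trace ℂ V f / Module.finrank ℂ V = c := by
    rw [hfe, map_smul, LinearMap.trace_id]; field_simp; simp [mul_comm]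
  rw [this]; exact key

theorem involution_trace_nonneg (V : Type) [AddCommGroup V] [Module ℂ V]
    [FiniteDimensional ℂ V] (s : V →ₗ[ℂ] V) (hs : s * s = 1) (χ : ℝ)
    (hχ : LinearMap.trace ℂ V s = χ) : 0 ≤ (Module.finrank ℂ V : ℝ) + χ := by
  have hP : IsIdempotentElem ((1 / 2 : ℂ) • (1 + s)) := by
    unfold IsIdempotentElem
    rw [smul_mul_smul_comm, mul_add, add_mul, add_mul, hs]
    ext v; simp; module
  have := (LinearMap.IsIdempotentElem.isProj_range _ hP).trace
  rw [map_smul, map_add, LinearMap.trace_one, hχ] at this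
  have h2 : (1 / 2 : ℝ) * ((Module.finrank ℂ V : ℝ) + χ) =
    Module.finrank ℂ (LinearMap.range ((1 / 2 : ℂ) • (1 + s))) := by
    apply Complex.ofReal_injective
    push_cast
    simpa using this
  have h3 : (0 : ℝ) ≤ Module.finrank ℂ (LinearMap.range ((1 / 2 : ℂ) • (1 + s))) := by positivity
  linarith

theorem permProd_cons {d T : ℕ} (s : Equiv.Perm (Fin d)) (σ : Fin T → Equiv.Perm (Fin d))
    (b : Bool) (ξ : Fin T → Bool) :
    permProd (Fin.cons s σ : Fin (T + 1) → _) (Fin.cons b ξ : Fin (T + 1) → Bool) =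
      (if b then s else 1) * permProd σ ξ := by
  simp [permProd, List.ofFn_succ]

/-- the sum of all products in the group algebra -/
def Mvec {d T : ℕ} (σ : Fin T → Equiv.Perm (Fin d)) : MonoidAlgebra ℂ (Equiv.Perm (Fin d)) :=
  ∑ ξ : Fin T → Bool, MonoidAlgebra.single (permProd σ ξ) 1

/-- the sum of all inverses of products in the group algebra -/
def Nvec {d T : ℕ} (σ : Fin T → Equiv.Perm (Fin d)) : MonoidAlgebra ℂ (Equiv.Perm (Fin d)) :=
  ∑ ξ : Fin T → Bool, MonoidAlgebra.single (permProd σ ξ)⁻¹ 1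

/-- `∑ (1 + s)` over transpositions `s`. -/
def Yel (d : ℕ) : MonoidAlgebra ℂ (Equiv.Perm (Fin d)) :=
  ∑ s : {τ : Equiv.Perm (Fin d) // τ.IsSwap}, (1 + MonoidAlgebra.single (s : Equiv.Perm (Fin d)) 1)

theorem sum_cons {α β : Type*} [Fintype α] [AddCommMonoid β] {T : ℕ} (F : (Fin (T + 1) → α) → β) :
    ∑ x, F x = ∑ a : α, ∑ y : Fin T → α, F (Fin.cons a y) := by
  rw [← (Fin.consEquiv fun _ => α).sum_comp, Fintype.sum_prod_type]
  rfl

theorem Mvec_cons {d T : ℕ} (s : Equiv.Perm (Fin d)) (σ : Fin T → Equiv.Perm (Fin d)) :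
    Mvec (Fin.cons s σ : Fin (T + 1) → _) = (1 + MonoidAlgebra.single s 1) * Mvec σ := by
  unfold Mvec
  rw [sum_cons]
  simp only [permProd_cons, Fintype.sum_bool, add_mul, Finset.mul_sum, one_mul,
    MonoidAlgebra.single_mul_single]
  simp [add_comm, Finset.sum_add_distrib]

theorem Nvec_cons {d T : ℕ} (s : Equiv.Perm (Fin d)) (hs : s⁻¹ = s)
    (σ : Fin T → Equiv.Perm (Fin d)) :
    Nvec (Fin.cons s σ : Fin (T + 1) → _) = Nvec σ * (1 + MonoidAlgebra.single s 1) := by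
  unfold Nvec
  rw [sum_cons]
  simp only [permProd_cons, Fintype.sum_bool, mul_add, Finset.sum_mul, mul_one, mul_inv_rev,
    MonoidAlgebra.single_mul_single]
  simp [add_comm, hs]

theorem swap_inv {d : ℕ} (s : Equiv.Perm (Fin d)) (h : s.IsSwap) : s⁻¹ = s := by
  obtain ⟨x, y, _, rfl⟩ := h
  simp

theorem Yel_comm_single (d : ℕ) (g : Equiv.Perm (Fin d)) :
    Yel d * MonoidAlgebra.single g 1 = MonoidAlgebra.single g 1 * Yel d := by
  have hconj : ∀ (g s : Equiv.Perm (Fin d)), s.IsSwap → (g * s * g⁻¹).IsSwap := by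
    rintro g s ⟨x, y, hxy, rfl⟩
    refine ⟨g x, g y, fun h => hxy (g.injective h), ?_⟩
    rw [Equiv.swap_apply_apply]
  let E : {τ : Equiv.Perm (Fin d) // τ.IsSwap} ≃ {τ : Equiv.Perm (Fin d) // τ.IsSwap} :=
    { toFun := fun s => ⟨g * s * g⁻¹, hconj g s s.2⟩
      invFun := fun s => ⟨g⁻¹ * s * g, by simpa using hconj g⁻¹ s s.2⟩
      left_inv := fun s => by ext1; simp [mul_assoc]
      right_inv := fun s => by ext1; simp [mul_assoc] }
  unfold Yel
  rw [Finset.sum_mul, Finset.mul_sum, ← E.sum_comp]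
  refine Finset.sum_congr rfl fun s _ => ?_
  simp [E, add_mul, mul_add, MonoidAlgebra.single_mul_single]

theorem Yel_comm (d : ℕ) (a : MonoidAlgebra ℂ (Equiv.Perm (Fin d))) :
    Yel d * a = a * Yel d := by
  have : LinearMap.mulLeft ℂ (Yel d) = LinearMap.mulRight ℂ (Yel d) := by
    refine (MonoidAlgebra.basis (Equiv.Perm (Fin d)) ℂ).ext fun g => ?_
    simpa [MonoidAlgebra.basis] using Yel_comm_single d g
  exact LinearMap.congr_fun this a

theorem sum_NM (d T : ℕ) :
    ∑ σ : Fin T → {τ : Equiv.Perm (Fin d) // τ.IsSwap},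
      Nvec (fun t => (σ t : Equiv.Perm (Fin d))) * Mvec (fun t => (σ t : Equiv.Perm (Fin d))) =
    ((2 : ℂ) • Yel d) ^ T := by
  induction T with
  | zero => simp [Nvec, Mvec, permProd, MonoidAlgebra.one_def, MonoidAlgebra.single_mul_single]
  | succ T ih =>
    rw [sum_cons, Finset.sum_comm, pow_succ', ← ih, Finset.mul_sum]
    refine Finset.sum_congr rfl fun σ _ => ?_
    have hc : ∀ s : {τ : Equiv.Perm (Fin d) // τ.IsSwap},
        (fun t => (((Fin.cons s σ : Fin (T + 1) → {τ : Equiv.Perm (Fin d) // τ.IsSwap}) t :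
          {τ : Equiv.Perm (Fin d) // τ.IsSwap}) : Equiv.Perm (Fin d))) =
        Fin.cons (s : Equiv.Perm (Fin d)) (fun t => (σ t : Equiv.Perm (Fin d))) := by
      intro s; funext t
      refine Fin.cases ?_ (fun t => ?_) t <;> simp
    have hstep : ∀ s : {τ : Equiv.Perm (Fin d) // τ.IsSwap},
        (1 + MonoidAlgebra.single (s : Equiv.Perm (Fin d)) (1 : ℂ)) *
          (1 + MonoidAlgebra.single (s : Equiv.Perm (Fin d)) (1 : ℂ)) =
        (2 : ℂ) • (1 + MonoidAlgebra.single (s : Equiv.Perm (Fin d)) (1 : ℂ)) := by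
      intro s
      have h1 : (s : Equiv.Perm (Fin d)) * s = 1 := by
        exact mul_eq_one_iff_inv_eq.2 (swap_inv s.1 s.2)
      have h2 : MonoidAlgebra.single (s : Equiv.Perm (Fin d)) (1 : ℂ) *
          MonoidAlgebra.single (s : Equiv.Perm (Fin d)) (1 : ℂ) = 1 := by
        rw [MonoidAlgebra.single_mul_single, h1, MonoidAlgebra.one_def, one_mul]
      rw [mul_add, add_mul, add_mul, h2, one_mul, mul_one, one_mul]
      module
    have : ∀ s : {τ : Equiv.Perm (Fin d) // τ.IsSwap}, 
        Nvec (fun t => (((Fin.cons s σ : Fin (T + 1) → {τ : Equiv.Perm (Fin d) // τ.IsSwap}) t :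
          {τ : Equiv.Perm (Fin d) // τ.IsSwap}) : Equiv.Perm (Fin d))) *
        Mvec (fun t => (((Fin.cons s σ : Fin (T + 1) → {τ : Equiv.Perm (Fin d) // τ.IsSwap}) t :
          {τ : Equiv.Perm (Fin d) // τ.IsSwap}) : Equiv.Perm (Fin d))) =
        Nvec (fun t => (σ t : Equiv.Perm (Fin d))) *
          ((2 : ℂ) • (1 + MonoidAlgebra.single (s : Equiv.Perm (Fin d)) (1 : ℂ))) *
          Mvec (fun t => (σ t : Equiv.Perm (Fin d))) := by
      intro s
      rw [hc, Nvec_cons _ (swap_inv _ s.2), Mvec_cons, ← hstep]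
      simp only [mul_assoc]
    rw [Finset.sum_congr rfl fun s _ => this s, ← Finset.sum_mul, ← Finset.mul_sum,
      ← Finset.smul_sum]
    change _ * ((2 : ℂ) • Yel d) * _ = _
    rw [mul_smul_comm, ← Yel_comm, smul_mul_assoc, smul_mul_assoc, mul_assoc]

/-- number of exponent sequences giving `τ` -/
def cnt {d T : ℕ} (σ : Fin T → Equiv.Perm (Fin d)) (τ : Equiv.Perm (Fin d)) : ℕ :=
  (Finset.univ.filter fun ξ : Fin T → Bool => permProd σ ξ = τ).card

theorem sum_cnt {d T : ℕ} (σ : Fin T → Equiv.Perm (Fin d)) : ∑ τ, cnt σ τ = 2 ^ T := by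
  unfold cnt
  rw [← Finset.card_eq_sum_card_fiberwise (fun _ _ => Finset.mem_coe.2 (Finset.mem_univ _))]
  simp

theorem coeff_NM {d T : ℕ} (σ : Fin T → Equiv.Perm (Fin d)) :
    (Nvec σ * Mvec σ).coeff 1 = ∑ τ, (cnt σ τ : ℂ) ^ 2 := by
  have hM : ∀ τ, ∑ ξ : Fin T → Bool, (if permProd σ ξ = τ then (1 : ℂ) else 0) = cnt σ τ := by
    intro τ; simp [cnt]
  have : ∀ τ, (cnt σ τ : ℂ) ^ 2 = ∑ ξ : Fin T → Bool, ∑ ξ' : Fin T → Bool,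
      (if permProd σ ξ = τ then (1 : ℂ) else 0) * (if permProd σ ξ' = τ then (1 : ℂ) else 0) := by
    intro τ; rw [sq, ← hM, Finset.sum_mul_sum]
  rw [Finset.sum_congr rfl fun τ _ => this τ, Finset.sum_comm]
  unfold Nvec Mvec
  rw [Finset.sum_mul, MonoidAlgebra.coeff_sum, Finsupp.finsetSum_apply]
  refine Finset.sum_congr rfl fun ξ _ => ?_
  rw [Finset.sum_comm, Finset.mul_sum, MonoidAlgebra.coeff_sum, Finsupp.finsetSum_apply]
  refine Finset.sum_congr rfl fun ξ' _ => ?_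
  rw [MonoidAlgebra.single_mul_single]
  simp [MonoidAlgebra.coeff_single, Finsupp.single_apply, inv_mul_eq_one]

theorem exists_swap {d : ℕ} (hd : 2 ≤ d) : Nonempty {τ : Equiv.Perm (Fin d) // τ.IsSwap} :=
  ⟨⟨Equiv.swap ⟨0, by omega⟩ ⟨1, by omega⟩, ⟨0, by omega⟩, ⟨1, by omega⟩, by simp, rfl⟩⟩

/-- Any equivariant equivalence intertwines the action of `Y`. -/
theorem equiv_Y {d : ℕ} (S : Submodule (MonoidAlgebra ℂ (Equiv.Perm (Fin d)))
      (MonoidAlgebra ℂ (Equiv.Perm (Fin d))))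
    (M : Type) [AddCommGroup M] [Module ℂ M] (ψ : Equiv.Perm (Fin d) → (M →ₗ[ℂ] M))
    (φ : S ≃ₗ[ℂ] M) (hφ : ∀ (g : Equiv.Perm (Fin d)) (x : S),
      φ (MonoidAlgebra.single g (1 : ℂ) • x) = ψ g (φ x)) (x : S) :
    φ (Yel d • x) =
      (∑ s : {τ : Equiv.Perm (Fin d) // τ.IsSwap}, (1 + ψ s) : M →ₗ[ℂ] M) (φ x) := by
  unfold Yel
  rw [Finset.sum_smul, map_sum, LinearMap.sum_apply]
  refine Finset.sum_congr rfl fun s _ => ?_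
  rw [add_smul, one_smul, map_add, hφ]
  simp

theorem rep_Y_scalar {d : ℕ} (V : Type) [AddCommGroup V] [Module ℂ V]
    [FiniteDimensional ℂ V] [Nontrivial V] (ρ : Equiv.Perm (Fin d) →* (V →ₗ[ℂ] V))
    (hirred : ∀ W : Submodule ℂ V, (∀ g : Equiv.Perm (Fin d), ∀ v ∈ W, ρ g v ∈ W) →
      W = ⊥ ∨ W = ⊤) (χ : ℝ)
    (hχ : ∀ τ : Equiv.Perm (Fin d), τ.IsSwap → LinearMap.trace ℂ V (ρ τ) = (χ : ℂ)) (v : V) :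
    (∑ s : {τ : Equiv.Perm (Fin d) // τ.IsSwap}, (1 + ρ s) : V →ₗ[ℂ] V) v =
      (((Fintype.card {τ : Equiv.Perm (Fin d) // τ.IsSwap} : ℝ) *
        (1 + χ / (Module.finrank ℂ V : ℝ)) : ℝ) : ℂ) • v := by
  have hd : (Module.finrank ℂ V : ℂ) ≠ 0 := by
    exact_mod_cast Module.finrank_pos.ne'
  have hlift : (∑ s : {τ : Equiv.Perm (Fin d) // τ.IsSwap}, (1 + ρ s) : V →ₗ[ℂ] V) =
      MonoidAlgebra.lift ℂ (V →ₗ[ℂ] V) (Equiv.Perm (Fin d)) ρ (Yel d) := by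
    simp [Yel, map_sum, map_add, MonoidAlgebra.lift_single]
  rw [schur_scalar V ρ hirred]
  · congr 1
    rw [map_sum]
    have : ∀ s : {τ : Equiv.Perm (Fin d) // τ.IsSwap},
        LinearMap.trace ℂ V (1 + ρ s) = Module.finrank ℂ V + χ := by
      intro s; rw [map_add, LinearMap.trace_one, hχ _ s.2]
    rw [Finset.sum_congr rfl fun s _ => this s]
    push_cast
    simp only [Finset.sum_const, Finset.card_univ, nsmul_eq_mul]
    field_simp
  · intro g v
    have h := congrArg (MonoidAlgebra.lift ℂ (V →ₗ[ℂ] V) (Equiv.Perm (Fin d)) ρ)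
      (Yel_comm_single d g)
    rw [map_mul, map_mul, ← hlift, MonoidAlgebra.lift_single, one_smul] at h
    exact LinearMap.congr_fun h v

theorem rep_bound
    (d T : ℕ) (hd : 2 ≤ d)
    (ι : Type) [Fintype ι] (V : ι → Type)
    [∀ i, AddCommGroup (V i)] [∀ i, Module ℂ (V i)] [∀ i, FiniteDimensional ℂ (V i)]
    (ρ : ∀ i, Equiv.Perm (Fin d) →* (V i →ₗ[ℂ] V i))
    (hirred : ∀ i, ∀ W : Submodule ℂ (V i),
      (∀ g : Equiv.Perm (Fin d), ∀ v ∈ W, ρ i g v ∈ W) → W = ⊥ ∨ W = ⊤)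
    (hnontrivial : ∀ i, ∃ g : Equiv.Perm (Fin d), ρ i g ≠ LinearMap.id)
    (hcomplete : ∀ (W : Type) [AddCommGroup W] [Module ℂ W] [FiniteDimensional ℂ W],
      ∀ ψ : Equiv.Perm (Fin d) →* (W →ₗ[ℂ] W),
      (∀ U : Submodule ℂ W, (∀ g : Equiv.Perm (Fin d), ∀ v ∈ U, ψ g v ∈ U) →
        U = ⊥ ∨ U = ⊤) →
      (∃ g : Equiv.Perm (Fin d), ψ g ≠ LinearMap.id) →
      ∃ i, ∃ e : W ≃ₗ[ℂ] V i, ∀ g v, e (ψ g v) = ρ i g (e v))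
    (χ : ι → ℝ)
    (hχ : ∀ i, ∀ τ : Equiv.Perm (Fin d), τ.IsSwap →
      LinearMap.trace ℂ (V i) (ρ i τ) = (χ i : ℂ)) :
    (d.factorial * ((((2 : ℂ) • Yel d) ^ T).coeff 1) : ℂ).re ≤
      (4 * Fintype.card {τ : Equiv.Perm (Fin d) // τ.IsSwap} : ℝ) ^ T * (1 +
      ∑ i, (Module.finrank ℂ (V i) : ℝ) ^ 2 *
        ((1 + χ i / (Module.finrank ℂ (V i) : ℝ)) / 2) ^ T) := by
  have hVn : ∀ i, Nontrivial (V i) := by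
    intro i
    by_contra h
    rw [not_nontrivial_iff_subsingleton] at h
    obtain ⟨g, hg⟩ := hnontrivial i
    exact hg (LinearMap.ext fun v => Subsingleton.elim _ _)
  set N : ℝ := ((Fintype.card {τ : Equiv.Perm (Fin d) // τ.IsSwap} : ℕ) : ℝ) with hN
  have hpos : ∀ i, 0 ≤ 1 + χ i / (Module.finrank ℂ (V i) : ℝ) := by
    intro i
    obtain ⟨s, hs⟩ := exists_swap hd
    have h := involution_trace_nonneg (V i) (ρ i s) (by
      rw [← map_mul, mul_eq_one_iff_inv_eq.2 (swap_inv s hs), map_one]) (χ i) (hχ i s hs)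
    have hd : (0 : ℝ) < (Module.finrank ℂ (V i) : ℝ) := by
      exact_mod_cast Module.finrank_pos
    rw [← div_self hd.ne', ← add_div]
    positivity
  obtain ⟨n, S, e0, hS⟩ := IsSemisimpleModule.exists_linearEquiv_fin_dfinsupp
    (MonoidAlgebra ℂ (Equiv.Perm (Fin d))) (MonoidAlgebra ℂ (Equiv.Perm (Fin d)))
  have e : MonoidAlgebra ℂ (Equiv.Perm (Fin d)) ≃ₗ[MonoidAlgebra ℂ (Equiv.Perm (Fin d))]
      (∀ j, S j) := e0.trans DFinsupp.linearEquivFunOnFintype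
  have hSn : ∀ j, Nontrivial (S j) := fun j =>
    IsSimpleModule.nontrivial (MonoidAlgebra ℂ (Equiv.Perm (Fin d))) (S j)
  have hfdA : FiniteDimensional ℂ (MonoidAlgebra ℂ (Equiv.Perm (Fin d))) :=
    Module.Finite.of_basis (MonoidAlgebra.basis (Equiv.Perm (Fin d)) ℂ)
  have hfd : ∀ j, FiniteDimensional ℂ (S j) := fun j =>
    inferInstanceAs (FiniteDimensional ℂ ((S j).restrictScalars ℂ))
  -- classification of the simple constituents
  have hclass : ∀ j, ∃ o : Option ι,
      (o = none → ∃ φ : S j ≃ₗ[ℂ] ℂ, ∀ (g : Equiv.Perm (Fin d)) (x : S j),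
        φ (MonoidAlgebra.single g (1 : ℂ) • x) = (LinearMap.id : ℂ →ₗ[ℂ] ℂ) (φ x)) ∧
      (∀ i, o = some i → ∃ φ : S j ≃ₗ[ℂ] V i, ∀ (g : Equiv.Perm (Fin d)) (x : S j),
        φ (MonoidAlgebra.single g (1 : ℂ) • x) = ρ i g (φ x)) := by
    intro j
    let ψ : Equiv.Perm (Fin d) →* (S j →ₗ[ℂ] S j) :=
      ((Algebra.lsmul ℂ ℂ (S j) : MonoidAlgebra ℂ (Equiv.Perm (Fin d)) →ₐ[ℂ] _) :
        MonoidAlgebra ℂ (Equiv.Perm (Fin d)) →* _).comp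
        (MonoidAlgebra.of ℂ (Equiv.Perm (Fin d)))
    have hψ : ∀ g x, ψ g x = MonoidAlgebra.single g (1 : ℂ) • x := fun g x => rfl
    have hirr : ∀ U : Submodule ℂ (S j), (∀ g : Equiv.Perm (Fin d), ∀ v ∈ U, ψ g v ∈ U) →
        U = ⊥ ∨ U = ⊤ := by
      intro U hU
      let U' : Submodule (MonoidAlgebra ℂ (Equiv.Perm (Fin d))) (S j) :=
        { U with
          smul_mem' := by
            intro a x hx
            have hx' : x ∈ U := hx
            change a • x ∈ U
            have : ∀ a : MonoidAlgebra ℂ (Equiv.Perm (Fin d)), a • x ∈ U := by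
              intro a
              induction a using MonoidAlgebra.induction_on with
              | of g => exact hU g x hx'
              | add a b ha hb => rw [add_smul]; exact U.add_mem ha hb
              | smul r a ha => rw [smul_assoc]; exact U.smul_mem _ ha
            exact this a }
      have hUU : ∀ x, x ∈ U' ↔ x ∈ U := fun x => Iff.rfl
      rcases eq_bot_or_eq_top U' with h | h
      · left; ext x; rw [← hUU, h]; simp
      · right; ext x; rw [← hUU, h]; simp
    by_cases ht : ∃ g, ψ g ≠ LinearMap.id
    · obtain ⟨i, φ, hφ⟩ := hcomplete (S j) ψ hirr ht
      refine ⟨some i, by simp, ?_⟩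
      rintro i' hi'
      obtain rfl := Option.some_injective _ hi'
      exact ⟨φ, fun g x => hφ g x⟩
    · push Not at ht
      refine ⟨none, fun _ => ?_, by simp⟩
      have h1 : Module.finrank ℂ (S j) = 1 := by
        obtain ⟨v, hv⟩ := exists_ne (0 : S j)
        rw [finrank_eq_one_iff_of_nonzero v hv]
        rcases hirr (Submodule.span ℂ {v}) (fun g w hw => by rw [ht g]; exact hw) with h | h
        · exact absurd (Submodule.span_singleton_eq_bot.1 h) hv
        · exact h
      refine ⟨LinearEquiv.ofFinrankEq _ _ (by rw [h1, Module.finrank_self]), fun g x => ?_⟩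
      rw [← hψ, ht g]; rfl
  choose f hf0 hf1 using hclass
  let D : Option ι → ℕ := fun o => o.elim 1 fun i => Module.finrank ℂ (V i)
  let c : Option ι → ℝ := fun o => o.elim (N * 2) fun i =>
    N * (1 + χ i / (Module.finrank ℂ (V i) : ℝ))
  have hN0 : 0 ≤ N := by positivity
  have hc0 : ∀ o, 0 ≤ c o := by
    rintro (_ | i)
    · simp only [c, Option.elim]; positivity
    · exact mul_nonneg hN0 (hpos i)
  have hdim : ∀ j, Module.finrank ℂ (S j) = D (f j) := by
    intro j
    rcases h : f j with _ | i
    · obtain ⟨φ, -⟩ := hf0 j h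
      rw [φ.finrank_eq]; simp [D]
    · obtain ⟨φ, -⟩ := hf1 j i h
      rw [φ.finrank_eq]; simp [D]
  have hact : ∀ j (x : S j), Yel d • x = (c (f j) : ℂ) • x := by
    intro j x
    rcases h : f j with _ | i
    · obtain ⟨φ, hφ⟩ := hf0 j h
      apply φ.injective
      rw [equiv_Y (S j) ℂ (fun _ => LinearMap.id) φ hφ, map_smul]
      simp [c, hN]
      ring
    · obtain ⟨φ, hφ⟩ := hf1 j i h
      apply φ.injective
      rw [equiv_Y (S j) (V i) (ρ i) φ hφ, map_smul,
        rep_Y_scalar (V i) (ρ i) (hirred i) (χ i) (hχ i)]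
      rfl
  have hmult : ∀ o, (Finset.univ.filter fun j => f j = o).card ≤ D o := by
    rintro (_ | i)
    · have := mult_le S e hSn ℂ (fun _ => LinearMap.id) (Finset.univ.filter fun j => f j = none)
        (fun j hj => hf0 j (by simpa using hj))
      simpa [D] using this
    · exact mult_le S e hSn (V i) (ρ i) (Finset.univ.filter fun j => f j = some i)
        (fun j hj => hf1 j i (by simpa using hj))
  have hact2 : ∀ j (x : S j), (((2 : ℂ) • Yel d) ^ T) • x = ((2 * c (f j) : ℂ) ^ T) • x := by
    intro j x
    induction T with
    | zero => simp
    | succ T ih =>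
      rw [pow_succ', mul_smul, ih, smul_assoc, hact, pow_succ', ]
      simp only [smul_smul]
      congr 1; ring
  have htr : (d.factorial * ((((2 : ℂ) • Yel d) ^ T).coeff 1) : ℂ) =
      ∑ j, (2 * c (f j) : ℂ) ^ T * D (f j) := by
    have h1 := trace_regular (((2 : ℂ) • Yel d) ^ T)
    rw [Fintype.card_perm, Fintype.card_fin] at h1
    rw [← h1, ← LinearMap.trace_conj' _ (e.restrictScalars ℂ),
      trace_pi_scalar (fun j => S j) (fun j => (2 * c (f j) : ℂ) ^ T)]
    · simp only [hdim]
    · intro x j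
      rw [← hact2]
      have : (e.restrictScalars ℂ).conj (Algebra.lmul ℂ _ (((2 : ℂ) • Yel d) ^ T)) x =
          (((2 : ℂ) • Yel d) ^ T) • x := by
        simp only [LinearEquiv.conj_apply_apply]
        change e ((((2 : ℂ) • Yel d) ^ T) • (e.symm x)) = _
        rw [map_smul, LinearEquiv.apply_symm_apply]
      rw [this]; rfl
  have hre : (d.factorial * ((((2 : ℂ) • Yel d) ^ T).coeff 1) : ℂ).re =
      ∑ j, (2 * c (f j)) ^ T * D (f j) := by
    rw [htr]
    have : (∑ j, (2 * c (f j) : ℂ) ^ T * D (f j)) =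
      ((∑ j, (2 * c (f j)) ^ T * D (f j) : ℝ) : ℂ) := by push_cast; rfl
    rw [this, Complex.ofReal_re]
  rw [hre, ← Finset.sum_fiberwise (s := Finset.univ) (g := f)]
  calc ∑ o, ∑ j with f j = o, (2 * c (f j)) ^ T * (D (f j) : ℝ)
      ≤ ∑ o, (2 * c o) ^ T * (D o : ℝ) ^ 2 := by
        refine Finset.sum_le_sum fun o _ => ?_
        have : ∀ j ∈ Finset.univ.filter (fun j => f j = o),
            (2 * c (f j)) ^ T * (D (f j) : ℝ) = (2 * c o) ^ T * (D o : ℝ) := by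
          intro j hj
          rw [(Finset.mem_filter.1 hj).2]
        rw [Finset.sum_congr rfl this, Finset.sum_const, nsmul_eq_mul]
        have h1 : ((Finset.univ.filter fun j => f j = o).card : ℝ) ≤ D o := by
          exact_mod_cast hmult o
        have h2 : 0 ≤ (2 * c o) ^ T * (D o : ℝ) :=
          mul_nonneg (pow_nonneg (mul_nonneg (by norm_num) (hc0 o)) _) (by positivity)
        calc _ ≤ (D o : ℝ) * ((2 * c o) ^ T * (D o : ℝ)) := mul_le_mul_of_nonneg_right h1 h2
          _ = _ := by ring
    _ = _ := by
        rw [Fintype.sum_option, mul_add, Finset.mul_sum]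
        congr 1
        · simp [c, D]; ring
        · refine Finset.sum_congr rfl fun i _ => ?_
          simp only [c, D, Option.elim]
          rw [mul_left_comm ((4 * N) ^ T), ← mul_pow, mul_comm]
          congr 2
          ring

/-- **The Diaconis–Shahshahani upper bound lemma** applied to products of random
transpositions with Bernoulli exponents: the expected total variation distance to
uniformity is controlled by a sum over the nontrivial irreducible complex representations
of `S_d`. -/
theorem avgTV_le_rep_sum
    (d T : ℕ) (hd : 2 ≤ d) (hT : 1 ≤ T)
    (ι : Type) [Fintype ι] (V : ι → Type)
    [∀ i, AddCommGroup (V i)] [∀ i, Module ℂ (V i)] [∀ i, FiniteDimensional ℂ (V i)]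
    (ρ : ∀ i, Equiv.Perm (Fin d) →* (V i →ₗ[ℂ] V i))
    (hirred : ∀ i, ∀ W : Submodule ℂ (V i),
      (∀ g : Equiv.Perm (Fin d), ∀ v ∈ W, ρ i g v ∈ W) → W = ⊥ ∨ W = ⊤)
    (hnontrivial : ∀ i, ∃ g : Equiv.Perm (Fin d), ρ i g ≠ LinearMap.id)
    (hpairwise : ∀ i j, i ≠ j →
      ¬∃ e : V i ≃ₗ[ℂ] V j, ∀ g v, e (ρ i g v) = ρ j g (e v))
    (hcomplete : ∀ (W : Type) [AddCommGroup W] [Module ℂ W] [FiniteDimensional ℂ W],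
      ∀ ψ : Equiv.Perm (Fin d) →* (W →ₗ[ℂ] W),
      (∀ U : Submodule ℂ W, (∀ g : Equiv.Perm (Fin d), ∀ v ∈ U, ψ g v ∈ U) →
        U = ⊥ ∨ U = ⊤) →
      (∃ g : Equiv.Perm (Fin d), ψ g ≠ LinearMap.id) →
      ∃ i, ∃ e : W ≃ₗ[ℂ] V i, ∀ g v, e (ψ g v) = ρ i g (e v))
    (χ : ι → ℝ)
    (hχ : ∀ i, ∀ τ : Equiv.Perm (Fin d), τ.IsSwap →
      LinearMap.trace ℂ (V i) (ρ i τ) = (χ i : ℂ)) :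
    avgTV d T ≤
      Real.sqrt (∑ i, (Module.finrank ℂ (V i) : ℝ) ^ 2 *
        ((1 + χ i / (Module.finrank ℂ (V i) : ℝ)) / 2) ^ T) := by
  have hrep := rep_bound d T hd ι V ρ hirred hnontrivial hcomplete χ hχ
  set R : ℝ := ∑ i, (Module.finrank ℂ (V i) : ℝ) ^ 2 *
        ((1 + χ i / (Module.finrank ℂ (V i) : ℝ)) / 2) ^ T with hR
  have hNpos : (0 : ℝ) < Fintype.card {τ : Equiv.Perm (Fin d) // τ.IsSwap} := by
    have := exists_swap hd
    exact_mod_cast Fintype.card_pos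
  set N : ℝ := ((Fintype.card {τ : Equiv.Perm (Fin d) // τ.IsSwap} : ℕ) : ℝ) with hN
  have hF : (0 : ℝ) < d.factorial := by exact_mod_cast d.factorial_pos
  have hsum : (d.factorial * ((((2 : ℂ) • Yel d) ^ T).coeff 1) : ℂ).re =
      d.factorial * ∑ σ : Fin T → {τ : Equiv.Perm (Fin d) // τ.IsSwap},
        ∑ τ, (cnt (fun t => (σ t : Equiv.Perm (Fin d))) τ : ℝ) ^ 2 := by
    rw [← sum_NM, MonoidAlgebra.coeff_sum, Finsupp.finsetSum_apply]
    simp only [coeff_NM]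
    have : (d.factorial * ∑ σ : Fin T → {τ : Equiv.Perm (Fin d) // τ.IsSwap},
        ∑ τ, (cnt (fun t => (σ t : Equiv.Perm (Fin d))) τ : ℂ) ^ 2 : ℂ) =
        ((d.factorial * ∑ σ : Fin T → {τ : Equiv.Perm (Fin d) // τ.IsSwap},
        ∑ τ, (cnt (fun t => (σ t : Equiv.Perm (Fin d))) τ : ℝ) ^ 2 : ℝ) : ℂ) := by
      push_cast; rfl
    rw [this, Complex.ofReal_re]
  rw [hsum] at hrep
  have htv : ∀ σ : Fin T → Equiv.Perm (Fin d), tvToUniform σ ^ 2 ≤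
      d.factorial * (∑ τ, (cnt σ τ : ℝ) ^ 2) / 4 ^ T - 1 := by
    intro σ
    have h1 : tvToUniform σ ^ 2 ≤ d.factorial *
        ∑ τ : Equiv.Perm (Fin d), |permProdPMF σ τ - ((d.factorial : ℝ))⁻¹| ^ 2 := by
      have := sq_sum_le_card_mul_sum_sq (s := (Finset.univ : Finset (Equiv.Perm (Fin d))))
        (f := fun τ => |permProdPMF σ τ - ((d.factorial : ℝ))⁻¹|)
      rw [Finset.card_univ, Fintype.card_perm, Fintype.card_fin] at this
      exact this
    refine h1.trans (le_of_eq ?_)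
    have h2 : ∀ τ, |permProdPMF σ τ - ((d.factorial : ℝ))⁻¹| ^ 2 =
        (cnt σ τ : ℝ) ^ 2 / 4 ^ T - 2 * (cnt σ τ : ℝ) / 2 ^ T * ((d.factorial : ℝ))⁻¹ +
          ((d.factorial : ℝ))⁻¹ ^ 2 := by
      intro τ
      rw [sq_abs]
      change ((cnt σ τ : ℝ) / 2 ^ T - _) ^ 2 = _
      have : (4 : ℝ) ^ T = (2 ^ T) ^ 2 := by rw [← pow_mul, mul_comm, pow_mul]; norm_num
      rw [this]; ring
    have h3 : ∑ τ, (cnt σ τ : ℝ) = 2 ^ T := by exact_mod_cast sum_cnt σ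
    rw [Finset.sum_congr rfl fun τ _ => h2 τ, Finset.sum_add_distrib, Finset.sum_sub_distrib,
      ← Finset.sum_div, ← Finset.sum_mul, ← Finset.sum_div, ← Finset.mul_sum, h3,
      Finset.sum_const, Finset.card_univ, Fintype.card_perm, Fintype.card_fin, nsmul_eq_mul]
    field_simp
    ring
  have hcard : (Fintype.card (Fin T → {τ : Equiv.Perm (Fin d) // τ.IsSwap}) : ℝ) = N ^ T := by
    rw [Fintype.card_fun, Fintype.card_fin]; push_cast; rfl
  apply Real.le_sqrt_of_sq_le
  unfold avgTV
  rw [← hN, div_pow, div_le_iff₀ (by positivity)]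
  have hcs := sq_sum_le_card_mul_sum_sq
    (s := (Finset.univ : Finset (Fin T → {τ : Equiv.Perm (Fin d) // τ.IsSwap})))
    (f := fun σ => tvToUniform fun t => (σ t : Equiv.Perm (Fin d)))
  rw [Finset.card_univ, hcard] at hcs
  refine hcs.trans ?_
  have hNT : 0 < N ^ T := by positivity
  rw [sq (N ^ T), mul_left_comm]
  refine mul_le_mul_of_nonneg_left ?_ hNT.le
  refine (Finset.sum_le_sum fun σ _ => htv fun t => (σ t : Equiv.Perm (Fin d))).trans ?_
  rw [Finset.sum_sub_distrib, ← Finset.sum_div, ← Finset.mul_sum, Finset.sum_const,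
    Finset.card_univ, nsmul_eq_mul, hcard, mul_one, sub_le_iff_le_add,
    div_le_iff₀ (by positivity)]
  refine hrep.trans (le_of_eq ?_)
  rw [mul_pow]; ring


end KacJL
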